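/- arXiv:2502.17707 — 4 statements merged into one kernel-verified Lean document; each statement's English description precedes it below -/
import Mathlib

section
/- Let X be a locally Hausdorff, everywhere non-Hausdorff topological space, let κ be a cardinal with κ ≥ ℵ₁, let U ⊆ X be an open subset that is Hausdorff in the subspace topology, let A ⊆ U be κ-Baire in X, and let S be a scan of A in X. Then for every family {V_i}_{i ∈ I} of open Hausdorff subsets of X with |I| < κ, S is not contained in ⋃_{i∈I} V_i. -/
open Set Topology TopologicalSpace

universe u

/-- Two points are inseparable (`x ⋈ y`): distinct, and every open set containing
one meets every open set containing the other. -/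
def Bump {X : Type u} [TopologicalSpace X] (x y : X) : Prop :=
  x ≠ y ∧ ∀ U V : Set X, IsOpen U → IsOpen V → x ∈ U → y ∈ V → (U ∩ V).Nonempty

/-- `NH A` = points inseparable from some point of `A`. -/
def NH {X : Type u} [TopologicalSpace X] (A : Set X) : Set X :=
  {y | ∃ x ∈ A, Bump y x}

/-- `NHpt x = NH {x}`. -/
def NHpt {X : Type u} [TopologicalSpace X] (x : X) : Set X := NH {x}

/-- An Euclidean subset: open and homeomorphic to ℝⁿ. -/
def IsEuclidean {X : Type u} [TopologicalSpace X] (n : ℕ) (U : Set X) : Prop :=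
  IsOpen U ∧ Nonempty (U ≃ₜ EuclideanSpace ℝ (Fin n))

/-- An `n`-manifold: nonempty connected space, every point has an open
neighborhood homeomorphic to ℝⁿ (Hausdorffness NOT assumed). -/
def IsNManifold (X : Type u) [TopologicalSpace X] (n : ℕ) : Prop :=
  ConnectedSpace X ∧ ∀ x : X, ∃ U : Set X, x ∈ U ∧ IsEuclidean n U

/-- Locally Hausdorff space. -/
def LocallyHausdorff (X : Type u) [TopologicalSpace X] : Prop :=
  ∀ x : X, ∃ U : Set X, IsOpen U ∧ x ∈ U ∧ T2Space U

/-- Quasi-countably-compact subset: every countable open cover has a finite subcover. -/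
def QuasiCountablyCompact {X : Type u} [TopologicalSpace X] (K : Set X) : Prop :=
  ∀ U : ℕ → Set X, (∀ n, IsOpen (U n)) → K ⊆ ⋃ n, U n →
    ∃ s : Finset ℕ, K ⊆ ⋃ n ∈ s, U n

/-- `A` is `κ`-Baire in `X`: not covered by fewer than `κ` nowhere dense sets. -/
def KappaBaire {X : Type u} [TopologicalSpace X] (κ : Cardinal.{u}) (A : Set X) : Prop :=
  ∀ (ι : Type u) (F : ι → Set X), Cardinal.mk ι < κ →
    (∀ i, IsNowhereDense (F i)) → ¬ A ⊆ ⋃ i, F i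

/-- `S` is a scan of `A` in `X`. -/
def IsScan {X : Type u} [TopologicalSpace X] (S A : Set X) : Prop :=
  S ⊆ NH A ∧ ∀ x ∈ A, ((NHpt x).Nonempty ↔ (NHpt x ∩ S).Nonempty)

/-- `U` is sorted: a continuous map from `closure U` to a Hausdorff space,
injective on `U`. -/
def IsSorted {X : Type u} [TopologicalSpace X] (U : Set X) : Prop :=
  ∃ (H : Type u) (tH : TopologicalSpace H) (f : closure U → H),
    @T2Space H tH ∧ @Continuous _ H _ tH f ∧
      ∀ a b : closure U, (a : X) ∈ U → (b : X) ∈ U → f a = f b → a = b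

/-- `U` is weakly sorted: a continuous map from `closure U` to a Hausdorff space,
finite-to-one on `U`. -/
def IsWeaklySorted {X : Type u} [TopologicalSpace X] (U : Set X) : Prop :=
  ∃ (H : Type u) (tH : TopologicalSpace H) (f : closure U → H),
    @T2Space H tH ∧ @Continuous _ H _ tH f ∧
      ∀ h : H, {a : closure U | (a : X) ∈ U ∧ f a = h}.Finite

/-- H-maximal: open Hausdorff, with no open Hausdorff proper superset. -/
def IsHMaximal {X : Type u} [TopologicalSpace X] (U : Set X) : Prop :=
  IsOpen U ∧ T2Space U ∧
    ∀ V : Set X, IsOpen V → T2Space V → U ⊆ V → V = U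

/-- CH-maximal: connected open Hausdorff, with no connected open Hausdorff
proper superset. -/
def IsCHMaximal {X : Type u} [TopologicalSpace X] (U : Set X) : Prop :=
  IsConnected U ∧ IsOpen U ∧ T2Space U ∧
    ∀ V : Set X, IsConnected V → IsOpen V → T2Space V → U ⊆ V → V = U

/-- `U` is f-simple at `p`: every open `V ∋ p` contains an open `W ∋ p` such that
`W ∩ U` has finitely many connected components. -/
def FSimpleAt {X : Type u} [TopologicalSpace X] (U : Set X) (p : X) : Prop :=
  ∀ V : Set X, IsOpen V → p ∈ V → ∃ W : Set X, IsOpen W ∧ p ∈ W ∧ W ⊆ V ∧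
    {C : Set X | ∃ z ∈ W ∩ U, C = connectedComponentIn (W ∩ U) z}.Finite

/-- f-rim-simple: f-simple at every boundary point. -/
def FRimSimple {X : Type u} [TopologicalSpace X] (U : Set X) : Prop :=
  ∀ p ∈ closure U \ U, FSimpleAt U p

/-- cov(ℳ): least cardinality of a family of nowhere dense subsets of ℝ covering ℝ. -/
noncomputable def covMeager : Cardinal :=
  sInf {c : Cardinal | ∃ (ι : Type) (F : ι → Set ℝ),
    Cardinal.mk ι = c ∧ (∀ i, IsNowhereDense (F i)) ∧ ⋃ i, F i = Set.univ}

/-- A locally compact first countable S-space: Hausdorff, regular, locally compact,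
first countable, hereditarily separable, not Lindelöf. -/
def IsLCFCSSpace (S : Type) [TopologicalSpace S] : Prop :=
  T2Space S ∧ RegularSpace S ∧ LocallyCompactSpace S ∧
    FirstCountableTopology S ∧ (∀ A : Set S, SeparableSpace A) ∧ ¬ LindelofSpace S

/-! A point `x` inseparable from a point `y` of an open Hausdorff set `V` lies in the closure of `V`
but not in `V`, hence in the frontier of `V`, which is nowhere dense. So a cover of the scan by open
Hausdorff sets yields a cover of `A` by equally many nowhere dense sets. -/

section

variable {X : Type u} [TopologicalSpace X] {x y : X} {V A S : Set X}

theorem isNowhereDense_frontier_of_isOpen (hV : IsOpen V) : IsNowhereDense (frontier V) := by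
  rw [isClosed_frontier.isNowhereDense_iff, ← frontier_compl]
  exact interior_frontier hV.isClosed_compl

theorem mem_NHpt_iff_bump : y ∈ NHpt x ↔ Bump y x := by
  simp only [NHpt, NH, mem_singleton_iff, exists_eq_left, mem_ofPred_eq]

namespace Bump

theorem mem_closure (h : Bump y x) (hV : IsOpen V) (hy : y ∈ V) : x ∈ closure V :=
  mem_closure_iff.2 fun W hW hx ↦ inter_comm V W ▸ h.2 V W hV hW hy hx

theorem notMem_of_t2Space (h : Bump y x) (hV : IsOpen V) [T2Space V] (hy : y ∈ V) : x ∉ V := by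
  intro hx
  have hne : (⟨y, hy⟩ : V) ≠ ⟨x, hx⟩ := fun heq ↦ h.1 (congrArg Subtype.val heq)
  obtain ⟨P, Q, hP, hQ, hyP, hxQ, hPQ⟩ :=
    separated_by_isOpenEmbedding hV.isOpenEmbedding_subtypeVal hne
  exact not_disjoint_iff_nonempty_inter.2 (h.2 P Q hP hQ hyP hxQ) hPQ

theorem mem_frontier (h : Bump y x) (hV : IsOpen V) [T2Space V] (hy : y ∈ V) : x ∈ frontier V :=
  hV.frontier_eq ▸ ⟨h.mem_closure hV hy, h.notMem_of_t2Space hV hy⟩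

end Bump

theorem subset_iUnion_frontier_of_subset_iUnion {ι : Sort*} {V : ι → Set X}
    (hV : ∀ i, IsOpen (V i) ∧ T2Space (V i)) (hS : ∀ x ∈ A, (NHpt x ∩ S).Nonempty)
    (hSV : S ⊆ ⋃ i, V i) : A ⊆ ⋃ i, frontier (V i) := by
  intro x hx
  obtain ⟨y, hyx, hyS⟩ := hS x hx
  obtain ⟨i, hyi⟩ := mem_iUnion.1 (hSV hyS)
  have := (hV i).2
  exact mem_iUnion.2 ⟨i, (mem_NHpt_iff_bump.1 hyx).mem_frontier (hV i).1 hyi⟩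

theorem stmt1_general {κ : Cardinal.{u}} (hA : KappaBaire κ A)
    (hS : ∀ x ∈ A, (NHpt x ∩ S).Nonempty) {ι : Type u} {V : ι → Set X}
    (hcard : Cardinal.mk ι < κ) (hV : ∀ i, IsOpen (V i) ∧ T2Space (V i)) :
    ¬ S ⊆ ⋃ i, V i := fun hSV ↦
  hA ι (fun i ↦ frontier (V i)) hcard (fun i ↦ isNowhereDense_frontier_of_isOpen (hV i).1)
    (subset_iUnion_frontier_of_subset_iUnion hV hS hSV)

end

/-- In a locally Hausdorff everywhere non-Hausdorff space, a scan of a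
`κ`-Baire subset of an open Hausdorff set cannot be covered by fewer than `κ` open
Hausdorff sets. -/
theorem stmt1 {X : Type u} [TopologicalSpace X]
    (hLH : LocallyHausdorff X) (hENH : ∀ x : X, (NHpt x).Nonempty)
    (κ : Cardinal.{u}) (hκ : Cardinal.aleph 1 ≤ κ)
    (U : Set X) (hUopen : IsOpen U) (hUT2 : T2Space U)
    (A : Set X) (hAU : A ⊆ U) (hA : KappaBaire κ A)
    (S : Set X) (hS : IsScan S A)
    (ι : Type u) (V : ι → Set X) (hcard : Cardinal.mk ι < κ)
    (hV : ∀ i, IsOpen (V i) ∧ T2Space (V i)) :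
    ¬ S ⊆ ⋃ i, V i :=
  stmt1_general hA (fun x hx ↦ (hS.2 x hx).1 (hENH x)) hcard hV
end

section
/- Let M be an everywhere non-Hausdorff n-manifold, let κ ≥ ℵ₁ be a cardinal, let U ⊆ M be an Euclidean subset, let A ⊆ U be κ-Baire in M, and let S be a scan of A in M. Then S is not contained in the union of any family {K_i}_{i∈I} of subsets of M with |I| < κ such that each K_i is either quasi-compact, or quasi-countably compact with NH(K_i) ∩ K_i = ∅. -/
open Set Topology TopologicalSpace

universe u

/-!
The inseparable pairs form a closed relation on a locally Hausdorff space: a diagonal point has a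
Hausdorff neighborhood, and any other pair that is not inseparable lies in an open box `P ×ˢ Q`
with `P` and `Q` disjoint. Hence `NH K` is closed when `K` is sequentially compact. A closed `NH K`
with nonempty interior meets `K`, because every point inseparable from a point of an open set lies
in the closure of that set. If `K` is quasi-compact, finitely many Hausdorff open sets cover it, and
`NH K` lies in the union of their frontiers. So `NH K` is nowhere dense in both cases, while a scan
of `A` contained in `⋃ i, K i` forces `A ⊆ ⋃ i, NH (K i)`.
-/

section Inseparability

variable {X : Type u} [TopologicalSpace X] {x y : X} {V : Set X}

theorem bump_iff_ne_and_not_disjoint_nhds : Bump x y ↔ x ≠ y ∧ ¬ Disjoint (𝓝 x) (𝓝 y) := by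
  rw [(nhds_basis_opens x).disjoint_iff (nhds_basis_opens y)]
  simp only [Bump, not_exists, not_and, not_disjoint_iff_nonempty_inter]
  grind

theorem Bump.symm (h : Bump x y) : Bump y x := by
  rwa [bump_iff_ne_and_not_disjoint_nhds, ne_comm, disjoint_comm,
    ← bump_iff_ne_and_not_disjoint_nhds]

theorem Bump.mem_closure_s3 (h : Bump x y) (hV : IsOpen V) (hx : x ∈ V) : y ∈ closure V :=
  mem_closure_iff.2 fun W hW hy ↦ h.symm.2 W V hW hV hy hx

theorem not_bump_of_mem_of_t2Space [T2Space V] (hV : IsOpen V) (hx : x ∈ V) (hy : y ∈ V) :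
    ¬ Bump x y := by
  rw [bump_iff_ne_and_not_disjoint_nhds]
  rintro ⟨hne, hnd⟩
  have hdisj : Disjoint (𝓝 (⟨x, hx⟩ : V)) (𝓝 ⟨y, hy⟩) :=
    disjoint_nhds_nhds.2 (Subtype.coe_ne_coe.1 hne)
  rw [← Filter.disjoint_map Subtype.val_injective, hV.isOpenEmbedding_subtypeVal.map_nhds_eq,
    hV.isOpenEmbedding_subtypeVal.map_nhds_eq] at hdisj
  exact hnd hdisj

theorem isClosed_setOf_bump (hX : LocallyHausdorff X) : IsClosed {p : X × X | Bump p.1 p.2} := by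
  rw [← isOpen_compl_iff, isOpen_iff_mem_nhds]
  rintro ⟨x, y⟩ (hxy : ¬ Bump x y)
  rcases eq_or_ne x y with rfl | hne
  · obtain ⟨V, hV, hx, _⟩ := hX x
    filter_upwards [prod_mem_nhds (hV.mem_nhds hx) (hV.mem_nhds hx)] with p hp
    exact not_bump_of_mem_of_t2Space hV hp.1 hp.2
  · have hdisj : Disjoint (𝓝 x) (𝓝 y) := by
      by_contra hnd
      exact hxy (bump_iff_ne_and_not_disjoint_nhds.2 ⟨hne, hnd⟩)
    obtain ⟨P, ⟨hxP, hP⟩, Q, ⟨hyQ, hQ⟩, hPQ⟩ :=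
      ((nhds_basis_opens x).disjoint_iff (nhds_basis_opens y)).1 hdisj
    filter_upwards [prod_mem_nhds (hP.mem_nhds hxP) (hQ.mem_nhds hyQ)] with p hp hbump
    exact not_disjoint_iff_nonempty_inter.2 (hbump.2 P Q hP hQ hp.1 hp.2) hPQ

theorem NH_empty : NH (∅ : Set X) = ∅ := by simp [NH]

theorem NH_mono {A B : Set X} (h : A ⊆ B) : NH A ⊆ NH B :=
  fun _ ⟨x, hx, hyx⟩ ↦ ⟨x, h hx, hyx⟩

theorem NH_union (A B : Set X) : NH (A ∪ B) = NH A ∪ NH B := by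
  ext y
  simp only [NH, mem_union, mem_ofPred_eq, or_and_right, exists_or]

theorem NH_iUnion {ι : Sort*} (A : ι → Set X) : NH (⋃ i, A i) = ⋃ i, NH (A i) := by
  ext y
  simp only [NH, mem_iUnion, mem_ofPred_eq, ← exists_and_right]
  exact exists_comm

theorem IsScan.subset_NH {S A : Set X} (hS : IsScan S A) (hA : ∀ x ∈ A, (NHpt x).Nonempty) :
    A ⊆ NH S := by
  intro x hx
  obtain ⟨y, ⟨_, rfl, hyx⟩, hyS⟩ := (hS.2 x hx).1 (hA x hx)
  exact ⟨y, hyS, hyx.symm⟩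

end Inseparability

section NowhereDense

variable {X : Type u} [TopologicalSpace X] {K V : Set X}

theorem isNowhereDense_union {Y : Type*} [TopologicalSpace Y] {A B : Set Y}
    (hA : IsNowhereDense A) (hB : IsNowhereDense B) : IsNowhereDense (A ∪ B) := by
  rw [IsNowhereDense, closure_union,
    interior_union_isClosed_of_interior_empty isClosed_closure hB, hA]

theorem isNowhereDense_frontier_of_isOpen_s3 {Y : Type*} [TopologicalSpace Y] {W : Set Y}
    (hW : IsOpen W) : IsNowhereDense (frontier W) := by
  rw [isClosed_frontier.isNowhereDense_iff, ← frontier_compl]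
  exact interior_frontier hW.isClosed_compl

theorem NH_subset_frontier [T2Space V] (hV : IsOpen V) : NH V ⊆ frontier V := by
  rintro x ⟨y, hy, hxy⟩
  rw [hV.frontier_eq]
  exact ⟨hxy.symm.mem_closure_s3 hV hy, fun hx ↦ not_bump_of_mem_of_t2Space hV hx hy hxy⟩

theorem isNowhereDense_NH_of_isCompact (hX : LocallyHausdorff X) (hK : IsCompact K) :
    IsNowhereDense (NH K) := by
  refine hK.induction_on (p := fun s ↦ IsNowhereDense (NH s)) ?_ ?_ ?_ ?_
  · simp only [NH_empty, isNowhereDense_empty]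
  · exact fun s t hst ht ↦ ht.mono (NH_mono hst)
  · intro s t hs ht
    rw [NH_union]
    exact isNowhereDense_union hs ht
  · intro x _
    obtain ⟨V, hV, hx, _⟩ := hX x
    exact ⟨V, mem_nhdsWithin_of_mem_nhds (hV.mem_nhds hx),
      (isNowhereDense_frontier_of_isOpen_s3 hV).mono (NH_subset_frontier hV)⟩

theorem isNowhereDense_NH_of_isClosed_of_disjoint (hclosed : IsClosed (NH K))
    (hdisj : Disjoint (NH K) K) : IsNowhereDense (NH K) := by
  rw [hclosed.isNowhereDense_iff, eq_empty_iff_forall_notMem]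
  intro x hx
  obtain ⟨y, hyK, hxy⟩ := interior_subset hx
  have hyNH : y ∈ NH K :=
    closure_minimal interior_subset hclosed (hxy.mem_closure_s3 isOpen_interior hx)
  exact disjoint_left.1 hdisj hyNH hyK

theorem isClosed_NH_of_isSeqCompact [FirstCountableTopology X] (hX : LocallyHausdorff X)
    (hK : IsSeqCompact K) : IsClosed (NH K) := by
  refine isClosed_of_closure_subset fun y hy ↦ ?_
  obtain ⟨a, haK, hay⟩ := mem_closure_iff_seq_limit.1 hy
  choose b hbK hab using haK
  obtain ⟨z, hzK, φ, hφ, hbz⟩ := hK hbK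
  have hlim : Filter.Tendsto (fun k ↦ (a (φ k), b (φ k))) Filter.atTop (𝓝 (y, z)) :=
    (hay.comp hφ.tendsto_atTop).prodMk_nhds hbz
  exact ⟨z, hzK, (isClosed_setOf_bump hX).mem_of_tendsto hlim (.of_forall fun k ↦ hab (φ k))⟩

theorem QuasiCountablyCompact.isSeqCompact [FirstCountableTopology X]
    (hK : QuasiCountablyCompact K) : IsSeqCompact K :=
  (isCountablyCompact_iff_countable_open_cover.2 hK).isSeqCompact

end NowhereDense

theorem IsNManifold.locallyHausdorff {X : Type u} [TopologicalSpace X] {n : ℕ}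
    (hX : IsNManifold X n) : LocallyHausdorff X := fun x ↦
  let ⟨V, hx, hV, ⟨e⟩⟩ := hX.2 x
  ⟨V, hV, hx, e.symm.t2Space⟩

theorem IsNManifold.firstCountableTopology {X : Type u} [TopologicalSpace X] {n : ℕ}
    (hX : IsNManifold X n) : FirstCountableTopology X := by
  refine ⟨fun x ↦ ?_⟩
  obtain ⟨V, hx, hV, ⟨e⟩⟩ := hX.2 x
  have : FirstCountableTopology V := e.isInducing.firstCountableTopology
  rw [← hV.isOpenEmbedding_subtypeVal.map_nhds_eq ⟨x, hx⟩]
  infer_instance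

theorem stmt3_general {X : Type u} [TopologicalSpace X] [FirstCountableTopology X]
    (hX : LocallyHausdorff X) (κ : Cardinal.{u})
    (A : Set X) (hNH : ∀ x ∈ A, (NHpt x).Nonempty) (hA : KappaBaire κ A)
    (S : Set X) (hS : IsScan S A)
    (ι : Type u) (K : ι → Set X) (hcard : Cardinal.mk ι < κ)
    (hK : ∀ i, IsCompact (K i) ∨
      (QuasiCountablyCompact (K i) ∧ NH (K i) ∩ K i = ∅)) :
    ¬ S ⊆ ⋃ i, K i := by
  intro hSK
  have hnd : ∀ i, IsNowhereDense (NH (K i)) := by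
    intro i
    rcases hK i with hcomp | ⟨hqcc, hdisj⟩
    · exact isNowhereDense_NH_of_isCompact hX hcomp
    · exact isNowhereDense_NH_of_isClosed_of_disjoint
        (isClosed_NH_of_isSeqCompact hX hqcc.isSeqCompact) (disjoint_iff_inter_eq_empty.2 hdisj)
  refine hA ι (fun i ↦ NH (K i)) hcard hnd ?_
  calc A ⊆ NH S := hS.subset_NH hNH
    _ ⊆ NH (⋃ i, K i) := NH_mono hSK
    _ = ⋃ i, NH (K i) := NH_iUnion K

/-- A scan `S` of a `κ`-Baire subset of a Euclidean subset of an
everywhere non-Hausdorff manifold cannot be covered by fewer than `κ` sets, each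
quasi-compact or quasi-countably compact with `NH(K) ∩ K = ∅`. -/
theorem stmt3 {M : Type u} [TopologicalSpace M] (n : ℕ)
    (hM : IsNManifold M n) (hENH : ∀ x : M, (NHpt x).Nonempty)
    (κ : Cardinal.{u}) (hκ : Cardinal.aleph 1 ≤ κ)
    (U : Set M) (hU : IsEuclidean n U)
    (A : Set M) (hAU : A ⊆ U) (hA : KappaBaire κ A)
    (S : Set M) (hS : IsScan S A)
    (ι : Type u) (K : ι → Set M) (hcard : Cardinal.mk ι < κ)
    (hK : ∀ i, IsCompact (K i) ∨
      (QuasiCountablyCompact (K i) ∧ NH (K i) ∩ K i = ∅)) :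
    ¬ S ⊆ ⋃ i, K i := by
  have := hM.firstCountableTopology
  exact stmt3_general hM.locallyHausdorff κ A (fun x _ ↦ hENH x) hA S hS ι K hcard hK
end

section
/- Let A ⊆ ℝ be a closed set such that for all x, y ∈ A there exist real numbers a < x < b and a map h : (a,b) → ℝ which is a homeomorphism onto its image, satisfies h(A ∩ (a,b)) ⊆ A, and h(x) = y. Then either A = ℝ or A is a discrete subset of ℝ. -/
open Set Topology TopologicalSpace

universe u

/-!
A closed set that is neither empty nor everything has a point which is isolated in it from one side,
namely the end of a gap. A continuous injection of an interval is strictly monotone, so homogeneity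
makes every point of the set isolated from one side. There are only countably many such points, so
the set is countable. By Baire's theorem it has an isolated point, and homogeneity then makes every
point isolated.

Being isolated from one side in `A` is expressed as `IsLocalExtrOn id A x`.
-/

section Topology

theorem exists_isOpen_singleton_of_countable {X : Type*} [TopologicalSpace X] [T1Space X]
    [BaireSpace X] [Countable X] [Nonempty X] : ∃ x : X, IsOpen {x} := by
  obtain ⟨x, hx⟩ := nonempty_interior_of_iUnion_of_closed
    (fun x : X ↦ isClosed_singleton (x := x)) (iUnion_of_singleton X)
  exact ⟨x, interior_eq_iff_isOpen.1 (hx.subset_singleton_iff.1 interior_subset)⟩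

theorem exists_nhdsWithin_eq_pure_of_isClosed_of_countable {X : Type*} [TopologicalSpace X]
    [T2Space X] [LocallyCompactSpace X] {A : Set X} (hA : IsClosed A) (hne : A.Nonempty)
    (hcount : A.Countable) : ∃ x ∈ A, 𝓝[A] x = pure x := by
  have := hne.to_subtype
  have := hcount.to_subtype
  have := hA.locallyCompactSpace
  obtain ⟨x, hx⟩ := exists_isOpen_singleton_of_countable (X := A)
  refine ⟨x, x.2, ?_⟩
  rw [← map_nhds_subtype_val, isOpen_singleton_iff_nhds_eq_pure _ |>.1 hx, Filter.map_pure]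

theorem nhdsWithin_eq_pure_of_continuous_of_injective {X Y : Type*} [TopologicalSpace X]
    [TopologicalSpace Y] {f : X → Y} (hf : Continuous f) (hinj : Function.Injective f)
    {A : Set X} {B : Set Y} (hAB : MapsTo f A B) {x : X} (hx : x ∈ A)
    (hfx : 𝓝[B] (f x) = pure (f x)) : 𝓝[A] x = pure x := by
  have hlim : Filter.Tendsto f (𝓝[A] x) (pure (f x)) :=
    hfx ▸ hf.continuousWithinAt.tendsto_nhdsWithin hAB
  refine le_antisymm (Filter.le_pure_iff.2 ?_) (pure_le_nhdsWithin hx)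
  exact (Filter.tendsto_pure.1 hlim).mono fun t ht ↦ hinj ht

theorem map_val_nhdsWithin_preimage_val {X : Type*} [TopologicalSpace X] {U : Set X} {x : U}
    (hU : U ∈ 𝓝 (x : X)) (A : Set X) :
    Filter.map Subtype.val (𝓝[Subtype.val ⁻¹' A] x) = 𝓝[A] (x : X) := by
  rw [IsInducing.subtypeVal.map_nhdsWithin_eq, Subtype.image_preimage_coe,
    nhdsWithin_inter_of_mem (mem_nhdsWithin_of_mem_nhds hU)]

end Topology

section Order

theorem locallyCompactSpace_of_compactIccSpace {X : Type*} [LinearOrder X] [TopologicalSpace X]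
    [OrderTopology X] [CompactIccSpace X] : LocallyCompactSpace X where
  local_compact_nhds _ _ hs :=
    let ⟨b, c, _, hmem, hsub⟩ := exists_Icc_mem_subset_of_mem_nhds hs
    ⟨Icc b c, hmem, hsub, isCompact_Icc⟩

theorem exists_isLocalMaxOn_id_of_lt_of_notMem {X : Type*} [LinearOrder X] [TopologicalSpace X]
    [OrderTopology X] [CompactIccSpace X] {A : Set X} (hA : IsClosed A) {p z : X} (hp : p ∈ A)
    (hz : z ∉ A) (hpz : p < z) : ∃ y ∈ A, IsLocalMaxOn id A y := by
  obtain ⟨y, ⟨hyA, hpy, hyz⟩, hmax⟩ :=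
    (isCompact_Icc.inter_left hA).exists_isGreatest ⟨p, hp, left_mem_Icc.2 hpz.le⟩
  have hyz : y < z := hyz.lt_of_ne fun h ↦ hz (h ▸ hyA)
  refine ⟨y, hyA, ?_⟩
  filter_upwards [self_mem_nhdsWithin, mem_nhdsWithin_of_mem_nhds (Iio_mem_nhds hyz)] with t htA htz
  exact (le_total t p).elim (fun htp ↦ htp.trans hpy) fun hpt ↦ hmax ⟨htA, hpt, htz.le⟩

theorem exists_isLocalExtrOn_id {X : Type*} [LinearOrder X] [TopologicalSpace X]
    [OrderTopology X] [CompactIccSpace X] {A : Set X} (hA : IsClosed A) (hne : A.Nonempty)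
    (huniv : A ≠ univ) : ∃ y ∈ A, IsLocalExtrOn id A y := by
  obtain ⟨p, hp⟩ := hne
  obtain ⟨z, hz⟩ := (ne_univ_iff_exists_notMem A).1 huniv
  rcases lt_or_gt_of_ne (ne_of_mem_of_not_mem hp hz) with hpz | hzp
  · obtain ⟨y, hy, hmax⟩ := exists_isLocalMaxOn_id_of_lt_of_notMem hA hp hz hpz
    exact ⟨y, hy, hmax.isExtr⟩
  · obtain ⟨y, hy, hmin⟩ := exists_isLocalMaxOn_id_of_lt_of_notMem (X := Xᵒᵈ) hA hp hz hzp
    exact ⟨y, hy, Or.inl hmin⟩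

theorem nhdsWithin_inter_Ioi_eq_bot_of_isLocalMaxOn_id {X : Type*} [Preorder X]
    [TopologicalSpace X] {A : Set X} {x : X} (h : IsLocalMaxOn id A x) :
    𝓝[A ∩ Ioi x] x = ⊥ := by
  rw [← Filter.eventually_false_iff_eq_bot]
  filter_upwards [nhdsWithin_mono x inter_subset_left h, self_mem_nhdsWithin] with t hle hlt
  exact hlt.2.not_ge hle

theorem countable_setOfPred_isLocalExtrOn_id {X : Type*} [LinearOrder X] [TopologicalSpace X]
    [OrderTopology X] [SecondCountableTopology X] (A : Set X) :
    {x ∈ A | IsLocalExtrOn id A x}.Countable := by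
  refine ((countable_setOfPred_isolated_left_within (s := A)).union
    (countable_setOfPred_isolated_right_within (s := A))).mono fun x hx ↦ ?_
  exact hx.2.imp
    (fun hmin ↦ ⟨hx.1, nhdsWithin_inter_Ioi_eq_bot_of_isLocalMaxOn_id (X := Xᵒᵈ) hmin⟩)
    (fun hmax ↦ ⟨hx.1, nhdsWithin_inter_Ioi_eq_bot_of_isLocalMaxOn_id hmax⟩)

theorem isLocalExtrOn_id_of_continuous_of_injective {X Y : Type*}
    [ConditionallyCompleteLinearOrder X] [TopologicalSpace X] [OrderTopology X] [DenselyOrdered X]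
    [LinearOrder Y] [TopologicalSpace Y] [OrderClosedTopology Y] {f : X → Y} (hf : Continuous f)
    (hinj : Function.Injective f) {A : Set X} {B : Set Y} (hAB : MapsTo f A B) {x : X}
    (hfx : IsLocalExtrOn id B (f x)) : IsLocalExtrOn id A x := by
  have hextr : IsLocalExtrOn f A x :=
    hfx.comp_tendsto (hf.continuousWithinAt.tendsto_nhdsWithin hAB)
  rcases hf.strictMono_of_inj hinj with hmono | hanti
  · exact hextr.imp (fun h ↦ h.mono fun _ ↦ hmono.le_iff_le.1)
      (fun h ↦ h.mono fun _ ↦ hmono.le_iff_le.1)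
  · exact hextr.symm.imp (fun h ↦ h.mono fun _ ↦ hanti.le_iff_ge.1)
      (fun h ↦ h.mono fun _ ↦ hanti.le_iff_ge.1)

end Order

/-- Some continuous injection of an order-connected neighbourhood of `x` into `X` sends `x` to `y`
and points of `A` to points of `A`. This is the homogeneity relation between points of `A`, with the
open interval around `x` replaced by a neighbourhood so that `x` may also be an endpoint of `X`. -/
def LocallyCarries {X : Type*} [Preorder X] [TopologicalSpace X] (A : Set X) (x y : X) : Prop :=
  ∃ (U : Set X) (hU : U ∈ 𝓝 x) (h : U → X), U.OrdConnected ∧ Continuous h ∧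
    Function.Injective h ∧ (∀ t : U, (t : X) ∈ A → h t ∈ A) ∧ h ⟨x, mem_of_mem_nhds hU⟩ = y

namespace LocallyCarries

theorem nhdsWithin_eq_pure {X : Type*} [Preorder X] [TopologicalSpace X] {A : Set X} {x y : X}
    (hxy : LocallyCarries A x y) (hx : x ∈ A) (hy : 𝓝[A] y = pure y) : 𝓝[A] x = pure x := by
  obtain ⟨U, hU, h, -, hcont, hinj, hmaps, rfl⟩ := hxy
  have hpure := nhdsWithin_eq_pure_of_continuous_of_injective hcont hinj
    (A := Subtype.val ⁻¹' A) hmaps hx hy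
  rw [← map_val_nhdsWithin_preimage_val (x := ⟨x, mem_of_mem_nhds hU⟩) hU, hpure, Filter.map_pure]

variable {X : Type*} [ConditionallyCompleteLinearOrder X] [TopologicalSpace X] [OrderTopology X]
  [DenselyOrdered X] {A : Set X}

theorem isLocalExtrOn_id {x y : X} (hxy : LocallyCarries A x y) (hy : IsLocalExtrOn id A y) :
    IsLocalExtrOn id A x := by
  obtain ⟨U, hU, h, hconn, hcont, hinj, hmaps, rfl⟩ := hxy
  let x' : U := ⟨x, mem_of_mem_nhds hU⟩
  have : Inhabited U := ⟨x'⟩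
  have hextr : IsLocalExtrOn id (Subtype.val ⁻¹' A) x' :=
    isLocalExtrOn_id_of_continuous_of_injective hcont hinj hmaps hy
  rw [IsLocalExtrOn, ← map_val_nhdsWithin_preimage_val (x := x') hU]
  exact hextr

theorem countable_of_ne_univ [SecondCountableTopology X] (hA : IsClosed A) (huniv : A ≠ univ)
    (hhom : ∀ x ∈ A, ∀ y ∈ A, LocallyCarries A x y) : A.Countable := by
  rcases A.eq_empty_or_nonempty with rfl | hne
  · exact countable_empty
  obtain ⟨y, hy, hextr⟩ := exists_isLocalExtrOn_id hA hne huniv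
  refine (countable_setOfPred_isLocalExtrOn_id A).mono fun x hx ↦ ?_
  exact ⟨hx, (hhom x hx y hy).isLocalExtrOn_id hextr⟩

end LocallyCarries

theorem stmt9_general {X : Type*} [ConditionallyCompleteLinearOrder X] [TopologicalSpace X]
    [OrderTopology X] [DenselyOrdered X] [SecondCountableTopology X] {A : Set X} (hA : IsClosed A)
    (hhom : ∀ x ∈ A, ∀ y ∈ A, LocallyCarries A x y) : A = univ ∨ DiscreteTopology A := by
  refine or_iff_not_imp_left.2 fun huniv ↦ ?_
  have hcount : A.Countable := LocallyCarries.countable_of_ne_univ hA huniv hhom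
  rw [← isDiscrete_iff_discreteTopology, isDiscrete_iff_nhdsWithin]
  intro x hx
  have : LocallyCompactSpace X := locallyCompactSpace_of_compactIccSpace
  obtain ⟨y, hy, hisol⟩ := exists_nhdsWithin_eq_pure_of_isClosed_of_countable hA ⟨x, hx⟩ hcount
  exact (hhom x hx y hy).nhdsWithin_eq_pure hx hisol

/-- A closed `A ⊆ ℝ` such that any point of `A` can be mapped to any
other by a local homeomorphism (onto its image) preserving `A` is either all of
`ℝ` or discrete. -/
theorem stmt9 (A : Set ℝ) (hA : IsClosed A)
    (hhom : ∀ x ∈ A, ∀ y ∈ A, ∃ (a b : ℝ) (hx : x ∈ Set.Ioo a b)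
      (h : Set.Ioo a b → ℝ), IsEmbedding h ∧
        (∀ t : Set.Ioo a b, (t : ℝ) ∈ A → h t ∈ A) ∧ h ⟨x, hx⟩ = y) :
    A = Set.univ ∨ DiscreteTopology A := by
  refine stmt9_general hA fun x hx y hy ↦ ?_
  obtain ⟨a, b, hxab, h, hemb, hmaps, hxy⟩ := hhom x hx y hy
  exact ⟨Ioo a b, isOpen_Ioo.mem_nhds hxab, h, ordConnected_Ioo, hemb.continuous, hemb.injective,
    hmaps, hxy⟩
end

section
/- Let M be an n-manifold and U ⊆ M an Euclidean subset. If U is the union of a family of fewer than cov(ℳ) closed subsets of M, then there is an open set V ⊆ U which is dense in U and satisfies NH(V) = ∅; in particular, M is not everywhere non-Hausdorff. -/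
open Set Topology TopologicalSpace

universe u

/-!
Take `V` to be the union of the interiors of the given closed sets `F i`. A point inseparable from
a point of `interior (F i)` lies in the closed set `F i`, hence in `U`; but `U` is open and
Hausdorff, so `NH V = ∅`. A point of `U` outside `V` lies in one of fewer than `cov(ℳ)` frontiers,
which are closed and nowhere dense, so `V` is dense in `U` as soon as fewer than `cov(ℳ)` dense open
subsets of `ℝⁿ` have dense intersection. For `n = 1` this follows from the definition of `cov(ℳ)`
by spreading a counterexample in one open set over `ℝ` through countably many translations, and
for larger `n` by a Kuratowski–Ulam argument.
-/

open scoped Cardinal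

universe v

section Inseparable

variable {X : Type u} [TopologicalSpace X] {x y : X}

theorem bump_iff_not_disjoint_nhds : Bump x y ↔ x ≠ y ∧ ¬Disjoint (𝓝 x) (𝓝 y) := by
  refine and_congr_right fun _ => ?_
  simp only [(nhds_basis_opens x).disjoint_iff (nhds_basis_opens y), not_exists, not_and,
    not_disjoint_iff_nonempty_inter]
  exact ⟨fun h A hA B hB => h A B hA.2 hB.2 hA.1 hB.1,
    fun h A B hA hB hxA hyB => h A ⟨hxA, hA⟩ B ⟨hyB, hB⟩⟩

theorem Bump.mem_of_mem_interior {C : Set X} (h : Bump y x) (hC : IsClosed C)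
    (hx : x ∈ interior C) : y ∈ C := by
  by_contra hy
  exact (bump_iff_not_disjoint_nhds.1 h).2 (Filter.disjoint_of_disjoint_of_mem
    disjoint_compl_left (hC.isOpen_compl.mem_nhds hy) (mem_interior_iff_mem_nhds.1 hx))

theorem not_bump_of_mem_of_mem {U : Set X} (hU : IsOpen U) [T2Space U] (hx : x ∈ U) (hy : y ∈ U) :
    ¬Bump x y := by
  rw [bump_iff_not_disjoint_nhds]
  rintro ⟨hne, hxy⟩
  have hsep : Disjoint (𝓝 (⟨x, hx⟩ : U)) (𝓝 ⟨y, hy⟩) :=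
    disjoint_nhds_nhds.2 fun h => hne (congrArg Subtype.val h)
  rw [← Filter.disjoint_map Subtype.val_injective, map_nhds_subtype_coe_eq_nhds hx (hU.mem_nhds hx),
    map_nhds_subtype_coe_eq_nhds hy (hU.mem_nhds hy)] at hsep
  exact hxy hsep

theorem NH_iUnion_interior_eq_empty {ι : Sort*} {U : Set X} (hU : IsOpen U) [T2Space U]
    {F : ι → Set X} (hF : ∀ i, IsClosed (F i)) (hFU : ∀ i, F i ⊆ U) :
    NH (⋃ i, interior (F i)) = ∅ := by
  refine eq_empty_of_forall_notMem ?_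
  rintro y ⟨x, hx, hyx⟩
  obtain ⟨i, hxi⟩ := mem_iUnion.1 hx
  exact not_bump_of_mem_of_mem hU (hFU i (hyx.mem_of_mem_interior (hF i) hxi))
    (hFU i (interior_subset hxi)) hyx

theorem NHpt_eq_empty_of_mem {A : Set X} (hA : NH A = ∅) (hx : x ∈ A) : NHpt x = ∅ :=
  subset_empty_iff.1 <| hA ▸ fun _ ⟨_, hz, hyz⟩ => ⟨x, hx, hz ▸ hyz⟩

end Inseparable

/-- `X` is `κ`-Baire in the strong sense that any fewer than `κ` dense open subsets have dense
intersection. Unlike `KappaBaire`, which only forbids covers of the whole space by fewer than `κ`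
nowhere dense sets, this forbids covers of every nonempty open subset; moreover the universe of `κ`
is independent of that of `X`. -/
def IsBaireBelow (κ : Cardinal.{v}) (X : Type*) [TopologicalSpace X] : Prop :=
  ∀ ⦃ι : Type v⦄ (G : ι → Set X), #ι < κ → (∀ i, IsOpen (G i)) → (∀ i, Dense (G i)) →
    Dense (⋂ i, G i)

theorem mk_prod_nat_lt {κ : Cardinal.{v}} (hκ : ℵ₀ < κ) {ι : Type v} (hι : #ι < κ) :
    #(ι × ℕ) < κ := by
  simpa only [Cardinal.mk_prod, Cardinal.lift_uzero, Cardinal.mk_nat, Cardinal.lift_aleph0] using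
    Cardinal.mul_lt_of_lt hκ.le hι hκ

namespace IsBaireBelow

variable {κ : Cardinal.{v}} {X Y : Type*} [TopologicalSpace X] [TopologicalSpace Y] {ι : Type v}

theorem of_discreteTopology [DiscreteTopology X] : IsBaireBelow κ X := by
  intro ι G _ _ hdense
  simp only [dense_discrete] at hdense ⊢
  exact iInter_eq_univ.2 hdense

theorem of_isOpenMap (hX : IsBaireBelow κ X) {f : X → Y} (hf : Continuous f) (hfo : IsOpenMap f)
    (hfd : DenseRange f) : IsBaireBelow κ Y := by
  intro ι G hι hopen hdense
  have hpre : Dense (f ⁻¹' ⋂ i, G i) := by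
    rw [preimage_iInter]
    exact hX _ hι (fun i => (hopen i).preimage hf) fun i => (hdense i).preimage hfo
  exact (hfd.dense_image hf hpre).mono (image_preimage_subset f _)

theorem of_homeomorph (hX : IsBaireBelow κ X) (e : X ≃ₜ Y) : IsBaireBelow κ Y :=
  hX.of_isOpenMap e.continuous e.isOpenMap e.surjective.denseRange

theorem dense_iUnion_interior_of_closed (hX : IsBaireBelow κ X) (hι : #ι < κ) {F : ι → Set X}
    (hF : ∀ i, IsClosed (F i)) (hcover : ⋃ i, F i = univ) : Dense (⋃ i, interior (F i)) := by
  have hdense : Dense (⋂ i, (frontier (F i))ᶜ) :=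
    hX _ hι (fun _ => isClosed_frontier.isOpen_compl)
      fun i => interior_eq_empty_iff_dense_compl.1 (interior_frontier (hF i))
  refine hdense.mono fun x hx => ?_
  obtain ⟨i, hxi⟩ := iUnion_eq_univ_iff.1 hcover x
  have hxi' : x ∈ F i \ frontier (F i) := ⟨hxi, mem_iInter.1 hx i⟩
  exact mem_iUnion.2 ⟨i, self_sdiff_frontier (F i) ▸ hxi'⟩

theorem subset_closure_iUnion_interior {U : Set X} (hU : IsOpen U) (hB : IsBaireBelow κ U)
    (hι : #ι < κ) {F : ι → Set X} (hF : ∀ i, IsClosed (F i)) (hcover : U ⊆ ⋃ i, F i) :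
    U ⊆ closure (⋃ i, interior (F i)) := by
  have hcoverU : ⋃ i, ((↑) : U → X) ⁻¹' F i = univ := by
    rwa [← preimage_iUnion, preimage_eq_univ_iff, Subtype.range_coe]
  have hdense := hB.dense_iUnion_interior_of_closed hι
    (fun i => (hF i).preimage continuous_subtype_val) hcoverU
  simp only [← hU.isOpenMap_subtype_val.preimage_interior_eq_interior_preimage
    continuous_subtype_val, ← preimage_iUnion] at hdense
  exact (Subtype.dense_iff.1 hdense).trans (closure_mono (image_preimage_subset _ _))

theorem dense_iInter_iInter_of_countable (hX : IsBaireBelow κ X) (hκ : ℵ₀ < κ) (hι : #ι < κ)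
    {β : Type*} [Countable β] {G : ι → β → Set X} (hopen : ∀ i b, IsOpen (G i b))
    (hdense : ∀ i b, Dense (G i b)) : Dense (⋂ i, ⋂ b, G i b) := by
  cases isEmpty_or_nonempty β
  · simp only [iInter_of_empty, iInter_univ, dense_univ]
  · obtain ⟨f, hf⟩ := exists_surjective_nat β
    simpa only [iInter, iInf_prod, hf.iInf_comp] using
      hX (fun p : ι × ℕ => G p.1 (f p.2)) (mk_prod_nat_lt hκ hι) (fun _ => hopen _ _)
        fun _ => hdense _ _

end IsBaireBelow

section Product

variable {κ : Cardinal.{v}} {X Y : Type*} [TopologicalSpace X] [TopologicalSpace Y]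

theorem dense_image_fst_inter_preimage_snd {G : Set (X × Y)} (hG : Dense G) {V : Set Y}
    (hV : IsOpen V) (hne : V.Nonempty) : Dense (Prod.fst '' (G ∩ Prod.snd ⁻¹' V)) := by
  refine dense_iff_inter_open.2 fun O hO hOne => ?_
  obtain ⟨⟨x, y⟩, ⟨hxO, hyV⟩, hxy⟩ := hG.inter_open_nonempty _ (hO.prod hV) (hOne.prod hne)
  exact ⟨x, hxO, (x, y), ⟨hxy, hyV⟩, rfl⟩

/- A vertical section of `G` is dense as soon as it meets each member of a countable basis, and
for one basic set this is a dense open condition on the base point. -/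
theorem IsBaireBelow.dense_setOf_forall_dense_section [SecondCountableTopology Y]
    (hX : IsBaireBelow κ X) (hκ : ℵ₀ < κ) {ι : Type v} (hι : #ι < κ) {G : ι → Set (X × Y)}
    (hopen : ∀ i, IsOpen (G i)) (hdense : ∀ i, Dense (G i)) :
    Dense {x | ∀ i, Dense (Prod.mk x ⁻¹' G i)} := by
  have : Countable (countableBasis Y) := (countable_countableBasis Y).to_subtype
  have hproj : Dense (⋂ i, ⋂ V : countableBasis Y, Prod.fst '' (G i ∩ Prod.snd ⁻¹' V.1)) :=
    hX.dense_iInter_iInter_of_countable hκ hι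
      (fun i V => isOpenMap_fst _
        ((hopen i).inter ((isOpen_of_mem_countableBasis V.2).preimage continuous_snd)))
      fun i V => dense_image_fst_inter_preimage_snd (hdense i)
        (isOpen_of_mem_countableBasis V.2) (nonempty_of_mem_countableBasis V.2)
  refine hproj.mono fun x hx i => (isBasis_countableBasis Y).dense_iff.2 fun V hV _ => ?_
  obtain ⟨⟨_, y⟩, ⟨hxy, hyV⟩, rfl⟩ := mem_iInter.1 (mem_iInter.1 hx i) ⟨V, hV⟩
  exact ⟨y, hyV, hxy⟩

theorem IsBaireBelow.prod [SecondCountableTopology Y] (hX : IsBaireBelow κ X)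
    (hY : IsBaireBelow κ Y) (hκ : ℵ₀ < κ) : IsBaireBelow κ (X × Y) := by
  intro ι G hι hopen hdense
  refine dense_iff_inter_open.2 ?_
  rintro W hW ⟨⟨a, b⟩, hab⟩
  obtain ⟨A, B, hA, hB, haA, hbB, hABW⟩ := isOpen_prod_iff.1 hW a b hab
  obtain ⟨x, hxA, hx⟩ := (hX.dense_setOf_forall_dense_section hκ hι hopen
    hdense).inter_open_nonempty A hA ⟨a, haA⟩
  have hsection : Dense (⋂ i, Prod.mk x ⁻¹' G i) :=
    hY _ hι (fun i => (hopen i).preimage (Continuous.prodMk_right x)) hx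
  obtain ⟨y, hyB, hy⟩ := hsection.inter_open_nonempty B hB ⟨b, hbB⟩
  exact ⟨(x, y), hABW ⟨hxA, hyB⟩, mem_iInter.2 fun i => mem_iInter.1 hy i⟩

theorem IsBaireBelow.pi_fin [SecondCountableTopology X] (hX : IsBaireBelow κ X) (hκ : ℵ₀ < κ)
    (n : ℕ) : IsBaireBelow κ (Fin n → X) := by
  induction n with
  | zero => exact of_discreteTopology
  | succ n ih =>
    have hX₁ : IsBaireBelow κ (Fin 1 → X) := hX.of_homeomorph (Homeomorph.funUnique (Fin 1) X).symm
    exact (ih.prod hX₁ hκ).of_homeomorph (Fin.appendHomeomorph n 1)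

end Product

/- If the `G i` have no common point in the open set `W`, then every point of the group has a
translate in `W` by a member of a dense sequence, so the translates of the `(G i)ᶜ` cover. -/
theorem isBaireBelow_of_forall_iUnion_ne_univ {κ : Cardinal.{v}} (hκ : ℵ₀ < κ) {A : Type*}
    [AddGroup A] [TopologicalSpace A] [SeparatelyContinuousAdd A] [SeparableSpace A]
    (hA : ∀ (ι : Type v) (F : ι → Set A), #ι < κ → (∀ i, IsNowhereDense (F i)) →
      ⋃ i, F i ≠ univ) : IsBaireBelow κ A := by
  intro ι G hι hopen hdense
  refine dense_iff_inter_open.2 ?_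
  rintro W hW ⟨w, hw⟩
  by_contra hempty
  refine hA (ι × ℕ) (fun p => (· + denseSeq A p.2) ⁻¹' (G p.1)ᶜ) (mk_prod_nat_lt hκ hι) ?_ ?_
  · rintro ⟨i, k⟩
    refine (isClosed_isNowhereDense_iff_compl.2 ?_).2
    rw [← preimage_compl, compl_compl]
    exact ⟨(hopen i).preimage (continuous_add_const _), (hdense i).preimage (isOpenMap_add_right _)⟩
  · refine iUnion_eq_univ_iff.2 fun x => ?_
    obtain ⟨k, hk⟩ := (denseRange_denseSeq A).exists_mem_open
      (hW.preimage (continuous_const_add x)) ⟨-x + w, by simpa using hw⟩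
    have hnot : x + denseSeq A k ∉ ⋂ i, G i := fun h => hempty ⟨_, hk, h⟩
    obtain ⟨i, hi⟩ := not_forall.1 (mt mem_iInter.2 hnot)
    exact ⟨(i, k), hi⟩

theorem iUnion_ne_univ_of_isNowhereDense {X : Type*} [TopologicalSpace X] [BaireSpace X] [Nonempty X]
    {ι : Type*} [Countable ι] {F : ι → Set X} (hF : ∀ i, IsNowhereDense (F i)) :
    ⋃ i, F i ≠ univ := fun hcover =>
  not_isMeagre_of_isOpen isOpen_univ univ_nonempty
    (hcover ▸ isMeagre_iUnion fun i => (hF i).isMeagre)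

theorem iUnion_ne_univ_of_mk_lt_covMeager {ι : Type} {F : ι → Set ℝ} (hι : #ι < covMeager)
    (hF : ∀ i, IsNowhereDense (F i)) : ⋃ i, F i ≠ univ := fun hcover =>
  hι.not_ge (csInf_le' ⟨ι, F, rfl, hF, hcover⟩)

theorem exists_iUnion_eq_univ_mk_eq_covMeager :
    ∃ (ι : Type) (F : ι → Set ℝ),
      #ι = covMeager ∧ (∀ i, IsNowhereDense (F i)) ∧ ⋃ i, F i = univ :=
  csInf_mem (s := {c | ∃ (ι : Type) (F : ι → Set ℝ),
    #ι = c ∧ (∀ i, IsNowhereDense (F i)) ∧ ⋃ i, F i = univ})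
    ⟨#ℝ, ℝ, fun x => {x}, rfl, fun x => isClosed_singleton.isNowhereDense_iff.2
      (interior_singleton x), iUnion_of_singleton ℝ⟩

theorem aleph0_lt_covMeager : ℵ₀ < covMeager := by
  obtain ⟨ι, F, hι, hF, hcover⟩ := exists_iUnion_eq_univ_mk_eq_covMeager
  by_contra hle
  have : Countable ι := Cardinal.mk_le_aleph0_iff.1 (hι.le.trans (not_lt.1 hle))
  exact iUnion_ne_univ_of_isNowhereDense hF hcover

theorem isBaireBelow_covMeager_real : IsBaireBelow covMeager ℝ :=
  isBaireBelow_of_forall_iUnion_ne_univ aleph0_lt_covMeager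
    fun _ _ => iUnion_ne_univ_of_mk_lt_covMeager

theorem isBaireBelow_covMeager_euclideanSpace (n : ℕ) :
    IsBaireBelow covMeager (EuclideanSpace ℝ (Fin n)) :=
  (isBaireBelow_covMeager_real.pi_fin aleph0_lt_covMeager n).of_homeomorph
    (EuclideanSpace.equiv (Fin n) ℝ).symm.toHomeomorph

namespace IsEuclidean

variable {X : Type u} [TopologicalSpace X] {n : ℕ} {U : Set X}

theorem t2Space (hU : IsEuclidean n U) : T2Space U :=
  let ⟨e⟩ := hU.2
  e.symm.t2Space

theorem nonempty (hU : IsEuclidean n U) : U.Nonempty :=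
  let ⟨e⟩ := hU.2
  ⟨_, (e.symm 0).2⟩

theorem isBaireBelow_covMeager (hU : IsEuclidean n U) : IsBaireBelow covMeager U :=
  let ⟨e⟩ := hU.2
  (isBaireBelow_covMeager_euclideanSpace n).of_homeomorph e.symm

end IsEuclidean

theorem stmt11_general {M : Type u} [TopologicalSpace M] {κ : Cardinal.{v}} {U : Set M}
    (hU : IsOpen U) [T2Space U] (hne : U.Nonempty) (hB : IsBaireBelow κ U) {ι : Type v}
    {F : ι → Set M} (hι : #ι < κ) (hF : ∀ i, IsClosed (F i)) (hUnion : U = ⋃ i, F i) :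
    (∃ V : Set M, IsOpen V ∧ V ⊆ U ∧ U ⊆ closure V ∧ NH V = ∅) ∧
    ¬ ∀ x : M, (NHpt x).Nonempty := by
  have hFU : ∀ i, F i ⊆ U := iUnion_subset_iff.1 hUnion.ge
  have hdense : U ⊆ closure (⋃ i, interior (F i)) :=
    hB.subset_closure_iUnion_interior hU hι hF hUnion.le
  have hNH : NH (⋃ i, interior (F i)) = ∅ := NH_iUnion_interior_eq_empty hU hF hFU
  refine ⟨⟨_, isOpen_iUnion fun _ => isOpen_interior,
    iUnion_subset fun i => interior_subset.trans (hFU i), hdense, hNH⟩, fun hall => ?_⟩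
  obtain ⟨x, hx⟩ := closure_nonempty_iff.1 (hne.mono hdense)
  exact (hall x).ne_empty (NHpt_eq_empty_of_mem hNH hx)

/-- If an Euclidean subset `U` of a manifold is a union of fewer than
`cov(ℳ)` closed subsets of `M`, then some open `V ⊆ U` dense in `U` has
`NH(V) = ∅`; in particular `M` is not everywhere non-Hausdorff. -/
theorem stmt11 {M : Type u} [TopologicalSpace M] (n : ℕ) (hM : IsNManifold M n)
    (U : Set M) (hU : IsEuclidean n U)
    (ι : Type) (F : ι → Set M) (hcard : Cardinal.mk ι < covMeager)
    (hF : ∀ i, IsClosed (F i)) (hUnion : U = ⋃ i, F i) :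
    (∃ V : Set M, IsOpen V ∧ V ⊆ U ∧ U ⊆ closure V ∧ NH V = ∅) ∧
    ¬ ∀ x : M, (NHpt x).Nonempty := by
  have := hU.t2Space
  exact stmt11_general hU.1 hU.nonempty hU.isBaireBelow_covMeager hcard hF hUnion
end
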